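/- Let a, b > 0 with a - 2b > 0. Let {x_n} ⊂ I be a sequence with x_n → 1 as n → ∞, and for each n let γ_n = min{r > 0 : f_{x_n}'(r) = 0} (which is well defined and satisfies γ_n < r_{x_n}, since f_{x_n}'(0) < 0). Then inf_{n ∈ ℕ} γ_n > 0, and there exists a subsequence along which γ_n → +∞. -/

import Mathlib

/-!
At the first critical radius `γ` the function `q = f' = g (f² - a g² + b) - (2/r) f` reaches `0`
from below, so `q'(γ) ≥ 0`. Differentiating the system,
`q' = f ((1 - g²) (f² - 3 a g² + b) + 2 / r²) + (2 g f - 2 / r) q`, and since `f(γ) < 0` this forces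
`2 / γ² ≤ (1 - g²) (3 a g² - f² - b)` at `γ`, so that `2 / γ² ≤ 3 a |1 - 1/g(γ)²|`: `γ` can only
stay bounded if `g(γ)` stays away from `1` (`two_le_of_first_zero`).

On the other hand `q < 0` on `(0, γ)` gives `f² < a g²`, and `w = 1 - 1/g²` satisfies the linear
equation `w' = -2 (f/g) w`. Hence `|w(r)| ≤ |w(0)| exp (2 √a r)` up to `γ` (`abs_w_le`).
Together, `2 ≤ 3 a γ² |1 - 1/x²| exp (2 √a γ)`. As `xₙ → 1`, this makes the whole sequence `γₙ`
tend to `+∞`; a sequence of positive numbers tending to `+∞` is bounded below by a positive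
constant.
-/

/-- A function that is negative to the left of one of its zeros has nonnegative derivative there. -/
lemma deriv_nonneg_of_neg_left {q : ℝ → ℝ} {c d : ℝ} (hc : 0 < c) (hd : HasDerivAt q d c)
    (h0 : q c = 0) (hneg : ∀ r ∈ Set.Ioo 0 c, q r < 0) : 0 ≤ d := by
  have ht := (hasDerivAt_iff_tendsto_slope_left_right.1 hd).1
  refine ge_of_tendsto ht ?_
  filter_upwards [Ioo_mem_nhdsLT hc] with r hr
  have h1 := hneg r hr
  rw [slope_def_field, h0]
  exact div_nonneg_of_nonpos (by linarith) (by linarith [hr.2])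

/-- The Grönwall estimate for `w = 1 - 1/g²`, which solves `w' = -2 (f/g) w`. -/
lemma abs_w_le {f g : ℝ → ℝ} {s c : ℝ} (hc : 0 < c)
    (hgc : ContinuousOn g (Set.Icc 0 c)) (hpos : ∀ r ∈ Set.Icc 0 c, 0 < g r)
    (hg : ∀ r ∈ Set.Ioo 0 c, HasDerivAt g (f r * (1 - g r ^ 2)) r)
    (hf : ∀ r ∈ Set.Ioo 0 c, -f r ≤ s * g r) :
    |1 - 1 / g c ^ 2| ≤ |1 - 1 / g 0 ^ 2| * Real.exp (2 * s * c) := by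
  have hanti : AntitoneOn
      (fun r => (1 - 1 / g r ^ 2) ^ 2 * Real.exp (-(4 * s * r))) (Set.Icc 0 c) := by
    refine antitoneOn_of_hasDerivWithinAt_nonpos (convex_Icc 0 c)
      (f' := fun r => 4 * (1 - 1 / g r ^ 2) ^ 2 * (-f r / g r - s) * Real.exp (-(4 * s * r)))
      ?_ ?_ ?_
    · refine ContinuousOn.mul (ContinuousOn.pow (continuousOn_const.sub
        (continuousOn_const.div (hgc.pow 2) fun r hr => ?_)) 2) (by fun_prop)
      exact pow_ne_zero 2 (hpos r hr).ne'
    · intro r hr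
      rw [interior_Icc] at hr
      have hne := (hpos r (Set.Ioo_subset_Icc_self hr)).ne'
      have h1 := (((hasDerivAt_const r (1 : ℝ)).sub
        ((hasDerivAt_const r (1 : ℝ)).div ((hg r hr).pow 2) (pow_ne_zero 2 hne))).pow 2).mul
        (((hasDerivAt_id r).const_mul (4 * s)).neg.exp)
      refine (h1.congr_deriv ?_).hasDerivWithinAt
      simp
      field_simp
      ring
    · intro r hr
      rw [interior_Icc] at hr
      have hp := hpos r (Set.Ioo_subset_Icc_self hr)
      have h2 : -f r / g r ≤ s := (div_le_iff₀ hp).2 (hf r hr)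
      have h3 : 0 ≤ 4 * (1 - 1 / g r ^ 2) ^ 2 := by positivity
      exact mul_nonpos_of_nonpos_of_nonneg
        (mul_nonpos_of_nonneg_of_nonpos h3 (by linarith)) (Real.exp_pos _).le
  have h := hanti (Set.left_mem_Icc.2 hc.le) (Set.right_mem_Icc.2 hc.le) hc.le
  simp only [mul_zero, neg_zero, Real.exp_zero, mul_one] at h
  have he : Real.exp (-(4 * s * c)) * Real.exp (2 * s * c) ^ 2 = 1 := by
    rw [← Real.exp_nat_mul, ← Real.exp_add]
    convert Real.exp_zero using 2
    push_cast
    ring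
  rw [← abs_of_pos (Real.exp_pos (2 * s * c)), ← abs_mul]
  apply sq_le_sq.1
  calc (1 - 1 / g c ^ 2) ^ 2
      = (1 - 1 / g c ^ 2) ^ 2 * Real.exp (-(4 * s * c)) * Real.exp (2 * s * c) ^ 2 := by
        rw [mul_assoc, he, mul_one]
    _ ≤ (1 - 1 / g 0 ^ 2) ^ 2 * Real.exp (2 * s * c) ^ 2 := by gcongr
    _ = _ := by ring

/-- The sign condition `q'(c) ≥ 0` at the first zero `c` of `q = f'`, rewritten as a lower bound
for the distance of `g c` to `1` in terms of `c`. -/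
lemma two_le_of_first_zero {a b : ℝ} (ha : 0 < a) (hb : 0 < b) {f g : ℝ → ℝ} {c : ℝ} (hc : 0 < c)
    (hfneg : f c < 0) (hgpos : 0 < g c)
    (hf : HasDerivAt f (g c * (f c ^ 2 - a * g c ^ 2 + b) - 2 / c * f c) c)
    (hg : HasDerivAt g (f c * (1 - g c ^ 2)) c)
    (hzero : g c * (f c ^ 2 - a * g c ^ 2 + b) - 2 / c * f c = 0)
    (hmin : ∀ r ∈ Set.Ioo 0 c, g r * (f r ^ 2 - a * g r ^ 2 + b) - 2 / r * f r < 0) :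
    2 ≤ 3 * a * c ^ 2 * |1 - 1 / g c ^ 2| := by
  rw [hzero] at hf
  have hq : HasDerivAt (fun r => g r * (f r ^ 2 - a * g r ^ 2 + b) - 2 / r * f r)
      (f c * ((1 - g c ^ 2) * (f c ^ 2 - 3 * a * g c ^ 2 + b) + 2 / c ^ 2)) c := by
    have h1 := (hg.mul (((hf.pow 2).sub ((hg.pow 2).const_mul a)).add_const b)).sub
      (((hasDerivAt_const c (2 : ℝ)).div (hasDerivAt_id c) hc.ne').mul hf)
    refine h1.congr_deriv ?_
    simp
    field_simp
    ring
  have h0 := deriv_nonneg_of_neg_left hc hq hzero hmin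
  have h1 : (1 - g c ^ 2) * (f c ^ 2 - 3 * a * g c ^ 2 + b) + 2 / c ^ 2 ≤ 0 := by
    by_contra! h
    exact absurd h0 (not_le.2 (mul_neg_of_neg_of_pos hfneg h))
  have hc2 : 0 < 2 / c := by positivity
  have h2 : f c ^ 2 - a * g c ^ 2 + b < 0 := by
    by_contra! h
    nlinarith [mul_nonneg hgpos.le h, mul_neg_of_pos_of_neg hc2 hfneg]
  have hg2 : 0 < g c ^ 2 := by positivity
  have hc3 : 0 < 2 / c ^ 2 := by positivity
  have hag : 0 < a * g c ^ 2 := by positivity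
  have h3 : g c ^ 2 < 1 := by
    by_contra! h
    have : 0 ≤ (1 - g c ^ 2) * (f c ^ 2 - 3 * a * g c ^ 2 + b) :=
      mul_nonneg_of_nonpos_of_nonpos (by linarith) (by linarith)
    linarith
  have h4 : 2 / c ^ 2 ≤ (1 - g c ^ 2) * (3 * a * g c ^ 2) := by
    nlinarith [mul_nonneg (sub_nonneg.2 h3.le) (add_nonneg (sq_nonneg (f c)) hb.le)]
  have h5 : 1 - g c ^ 2 ≤ |1 - 1 / g c ^ 2| := by
    have : 1 / g c ^ 2 - 1 = (1 - g c ^ 2) / g c ^ 2 := by field_simp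
    rw [abs_sub_comm]
    refine le_trans ?_ (le_abs_self _)
    rw [this, le_div_iff₀ hg2]
    nlinarith
  have h6 : (1 - g c ^ 2) * (3 * a * g c ^ 2) ≤ 3 * a * |1 - 1 / g c ^ 2| := by
    have : (1 - g c ^ 2) * (3 * a * g c ^ 2) ≤ (1 - g c ^ 2) * (3 * a) := by
      apply mul_le_mul_of_nonneg_left _ (by linarith)
      nlinarith
    nlinarith [mul_le_mul_of_nonneg_left h5 ha.le]
  have h7 := (div_le_iff₀ (by positivity : 0 < c ^ 2)).1 (h4.trans h6)
  linarith


/-- For `a, b > 0` with `a - 2b > 0`, let `xₙ ∈ I` with `xₙ → 1`, and for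
each `n` let `(fₙ, gₙ)` be the solution with data `(0, xₙ)`, `rₙ = r_{xₙ}` its first-zero
radius, and `γₙ = min {r > 0 : fₙ' r = 0}` (so `fₙ' < 0` on `(0, γₙ)`, `fₙ' γₙ = 0` and
`γₙ < rₙ`, where `fₙ' r = gₙ r (fₙ r ² - a gₙ r ² + b) - (2/r) fₙ r`).  Then
`inf γₙ > 0` and, along a subsequence, `γₙ → +∞`. -/
theorem shooting_first_critical_radius
    (a b : ℝ) (ha : 0 < a) (hb : 0 < b) (hab : 0 < a - 2 * b)
    (x : ℕ → ℝ) (hx1 : ∀ n, Real.sqrt (b / a) < x n)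
    (hxlim : Filter.Tendsto x Filter.atTop (nhds 1))
    (fn gn : ℕ → ℝ → ℝ) (rn : ℕ → ℝ) (γ : ℕ → ℝ)
    (hrn : ∀ n, 0 < rn n)
    (hfc : ∀ n, ContinuousOn (fn n) (Set.Icc 0 (rn n)))
    (hgc : ∀ n, ContinuousOn (gn n) (Set.Icc 0 (rn n)))
    (hfn0 : ∀ n, fn n 0 = 0) (hgn0 : ∀ n, gn n 0 = x n)
    (hode : ∀ n, ∀ r ∈ Set.Ioc (0 : ℝ) (rn n),
      HasDerivAt (fn n)
        (gn n r * ((fn n r) ^ 2 - a * (gn n r) ^ 2 + b) - 2 / r * fn n r) r ∧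
      HasDerivAt (gn n) (fn n r * (1 - (gn n r) ^ 2)) r)
    (hsign : ∀ n, ∀ r ∈ Set.Ioo (0 : ℝ) (rn n), fn n r < 0 ∧ 0 < gn n r)
    (hfnrn : ∀ n, fn n (rn n) = 0)
    (hγ0 : ∀ n, 0 < γ n) (hγrn : ∀ n, γ n < rn n)
    (hγzero : ∀ n,
      gn n (γ n) * ((fn n (γ n)) ^ 2 - a * (gn n (γ n)) ^ 2 + b)
        - 2 / γ n * fn n (γ n) = 0)
    (hγmin : ∀ n, ∀ r ∈ Set.Ioo (0 : ℝ) (γ n),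
      gn n r * ((fn n r) ^ 2 - a * (gn n r) ^ 2 + b) - 2 / r * fn n r < 0) :
    (∃ c : ℝ, 0 < c ∧ ∀ n, c ≤ γ n) ∧
    (∃ φ : ℕ → ℕ, StrictMono φ ∧
      Filter.Tendsto (fun k => γ (φ k)) Filter.atTop Filter.atTop) := by
  have key : ∀ n, 2 ≤ 3 * a * γ n ^ 2 *
      (|1 - 1 / x n ^ 2| * Real.exp (2 * Real.sqrt a * γ n)) := by
    intro n
    have hin : ∀ r ∈ Set.Ioc 0 (γ n), r ∈ Set.Ioo 0 (rn n) :=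
      fun r hr => ⟨hr.1, hr.2.trans_lt (hγrn n)⟩
    have hγm : γ n ∈ Set.Ioc 0 (γ n) := ⟨hγ0 n, le_rfl⟩
    have hpos : ∀ r ∈ Set.Icc 0 (γ n), 0 < gn n r := by
      intro r hr
      rcases hr.1.eq_or_lt with h | h
      · rw [← h, hgn0]
        exact (Real.sqrt_nonneg _).trans_lt (hx1 n)
      · exact (hsign n r (hin r ⟨h, hr.2⟩)).2
    have hbound : ∀ r ∈ Set.Ioo 0 (γ n), -fn n r ≤ Real.sqrt a * gn n r := by
      intro r hr
      have hr' := hin r ⟨hr.1, hr.2.le⟩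
      obtain ⟨hfr, hgr⟩ := hsign n r hr'
      have h1 := hγmin n r hr
      have h2 : 0 < 2 / r := div_pos two_pos hr.1
      have h3 : fn n r ^ 2 - a * gn n r ^ 2 + b < 0 := by
        by_contra! h
        nlinarith [mul_nonneg hgr.le h, mul_neg_of_pos_of_neg h2 hfr]
      refine (le_abs_self _).trans (abs_le_of_sq_le_sq ?_ (by positivity))
      rw [mul_pow, Real.sq_sqrt ha.le]
      nlinarith
    have hw := abs_w_le (f := fn n) (g := gn n) (hγ0 n)
      ((hgc n).mono (Set.Icc_subset_Icc_right (hγrn n).le)) hpos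
      (fun r hr => (hode n r (Set.Ioo_subset_Ioc_self (hin r ⟨hr.1, hr.2.le⟩))).2) hbound
    rw [hgn0] at hw
    obtain ⟨hf', hg'⟩ := hode n (γ n) (Set.Ioo_subset_Ioc_self (hin _ hγm))
    obtain ⟨hfr, hgr⟩ := hsign n _ (hin _ hγm)
    exact (two_le_of_first_zero ha hb (hγ0 n) hfr hgr hf' hg' (hγzero n) (hγmin n)).trans
      (mul_le_mul_of_nonneg_left hw (by positivity))
  have hlim : Filter.Tendsto γ Filter.atTop Filter.atTop := by
    rw [Filter.tendsto_atTop]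
    intro R
    have h1 : Filter.Tendsto
        (fun n => 3 * a * R ^ 2 * (|1 - 1 / x n ^ 2| * Real.exp (2 * Real.sqrt a * R)))
        Filter.atTop (nhds (3 * a * R ^ 2 *
          (|1 - 1 / (1 : ℝ) ^ 2| * Real.exp (2 * Real.sqrt a * R)))) := by
      refine ((Filter.Tendsto.abs ?_).mul_const _).const_mul _
      exact tendsto_const_nhds.sub (tendsto_const_nhds.div (hxlim.pow 2) (by norm_num))
    have h2 : 3 * a * R ^ 2 * (|1 - 1 / (1 : ℝ) ^ 2| * Real.exp (2 * Real.sqrt a * R)) < 2 := by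
      norm_num
    filter_upwards [h1.eventually_lt_const h2] with n hn
    by_contra! h
    refine absurd ((key n).trans ?_) (not_le.2 hn)
    have := hγ0 n
    gcongr
  refine ⟨?_, id, strictMono_id, hlim⟩
  -- All but finitely many `γ n` are at least `1`; the others have a positive minimum.
  obtain ⟨N, hN⟩ := Filter.eventually_atTop.1 (hlim.eventually_ge_atTop 1)
  obtain ⟨m, -, hm⟩ := (Finset.range (N + 1)).exists_min_image γ ⟨0, by simp⟩
  refine ⟨min 1 (γ m), lt_min one_pos (hγ0 m), fun n => ?_⟩
  rcases le_total N n with h | h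
  · exact (min_le_left _ _).trans (hN n h)
  · exact (min_le_right _ _).trans (hm n (Finset.mem_range.2 (by lia)))
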